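/- arXiv:1711.00532 — 5 statements merged into one kernel-verified Lean document; each statement's English description precedes it below -/
import Mathlib

section
/- Let T be a finset of trips, D ⊆ T, σ : α → α injective on D with σ '' D ⊆ T, and b : α → ℝ with b t < b (σ t) for every t ∈ D. Then every trip lies on exactly one bus: for each t ∈ T there exist a unique trip s ∈ T \ (D.image σ) and a natural number n such that σ^[k] s ∈ D for all k < n and σ^[n] s = t. -/
/-!
The first trips are the sources of the successor relation. Going backward from a trip strictly
decreases the time label within a finite set, so it ends at a source. Since predecessors are unique,
two trips with a common descendant lie on one chain; if both are sources, they coincide.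
-/

open Relation

section Source

variable {α : Type*} {r : α → α → Prop}

theorem exists_source_reflTransGen_of_acc {t : α} (ht : Acc r t) :
    ∃ s, (∀ u, ¬ r u s) ∧ ReflTransGen r s t := by
  induction ht with
  | intro t _ ih =>
    by_cases hsource : ∃ u, r u t
    · obtain ⟨u, hut⟩ := hsource
      obtain ⟨s, hs, hsu⟩ := ih u hut
      exact ⟨s, hs, hsu.tail hut⟩
    · exact ⟨t, not_exists.mp hsource, .refl⟩

theorem eq_of_reflTransGen_of_source {s t : α} (ht : ∀ u, ¬ r u t) (hst : ReflTransGen r s t) :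
    s = t := by
  rcases hst.cases_tail with rfl | ⟨u, -, hut⟩
  · rfl
  · exact absurd hut (ht u)

theorem reflTransGen_total_of_leftUnique (hr : Relator.LeftUnique r) {s s' t : α}
    (hs : ReflTransGen r s t) (hs' : ReflTransGen r s' t) :
    ReflTransGen r s s' ∨ ReflTransGen r s' s :=
  (ReflTransGen.total_of_right_unique hr.flip hs.swap hs'.swap).symm.imp
    reflTransGen_swap.mp reflTransGen_swap.mp

theorem existsUnique_source_reflTransGen (hr : Relator.LeftUnique r) {t : α} (ht : Acc r t) :
    ∃! s, (∀ u, ¬ r u s) ∧ ReflTransGen r s t := by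
  obtain ⟨s, hs, hst⟩ := exists_source_reflTransGen_of_acc ht
  refine ⟨s, ⟨hs, hst⟩, fun s' ⟨hs', hst'⟩ ↦ ?_⟩
  rcases reflTransGen_total_of_leftUnique hr hst hst' with h | h
  · exact (eq_of_reflTransGen_of_source hs' h).symm
  · exact eq_of_reflTransGen_of_source hs h

end Source

/-- The successor relation of the bus schedule `(D, σ)`: `BusStep D σ u v` says that the bus
serving `u` continues with `v`, so the trips of a bus are those reachable from its first one. The
set `D` is the domain on which the total function `σ` is meaningful. -/
def BusStep {α : Type*} (D : Set α) (σ : α → α) (u v : α) : Prop :=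
  u ∈ D ∧ σ u = v

namespace BusStep

variable {α : Type*} {T D : Set α} {σ : α → α}

theorem leftUnique (hσ : D.InjOn σ) : Relator.LeftUnique (BusStep D σ) :=
  fun _ _ _ ⟨hu, huw⟩ ⟨hv, hvw⟩ ↦ hσ hu hv (huw.trans hvw.symm)

theorem forall_not_iff_notMem_image {s : α} : (∀ u, ¬ BusStep D σ u s) ↔ s ∉ σ '' D :=
  not_exists.symm

theorem reflTransGen_iff_exists_iterate {s t : α} :
    ReflTransGen (BusStep D σ) s t ↔ ∃ n : ℕ, (∀ k < n, σ^[k] s ∈ D) ∧ σ^[n] s = t := by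
  constructor
  · intro hst
    induction hst with
    | refl => exact ⟨0, by simp, rfl⟩
    | tail _ huv ih =>
      obtain ⟨hu, rfl⟩ := huv
      obtain ⟨n, hn, rfl⟩ := ih
      exact ⟨n + 1, Nat.forall_lt_succ_right.mpr ⟨hn, hu⟩, Function.iterate_succ_apply' σ n s⟩
  · rintro ⟨n, hn, rfl⟩
    induction n with
    | zero => exact .refl
    | succ n ih =>
      obtain ⟨hn, hlast⟩ := Nat.forall_lt_succ_right.mp hn
      exact (ih hn).tail ⟨hlast, (Function.iterate_succ_apply' σ n s).symm⟩

theorem mem_of_reflTransGen (hDT : D ⊆ T) {s t : α} (ht : t ∈ T)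
    (hst : ReflTransGen (BusStep D σ) s t) : s ∈ T := by
  rcases hst.cases_head with rfl | ⟨_, hs, _⟩
  · exact ht
  · exact hDT hs.1

theorem wellFounded_of_finite_of_lt {β : Type*} [Preorder β] {b : α → β} (hD : D.Finite)
    (hb : ∀ t ∈ D, b t < b (σ t)) : WellFounded (BusStep D σ) := by
  have hwf : (D ∪ σ '' D).WellFoundedOn (b ⁻¹'o (· < ·)) :=
    (hD.union (hD.image σ)).wellFoundedOn
  refine Subrelation.wf ?_ (Set.wellFoundedOn_iff.mp hwf)
  rintro u _ ⟨hu, rfl⟩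
  exact ⟨hb u hu, .inl hu, .inr ⟨u, hu, rfl⟩⟩

end BusStep

theorem every_trip_on_unique_bus_general {α : Type*} {T D : Set α} {σ : α → α}
    (hDT : D ⊆ T) (hinj : D.InjOn σ) (hwf : WellFounded (BusStep D σ)) :
    ∀ t ∈ T, ∃! s, s ∈ T \ σ '' D ∧ ∃ n : ℕ, (∀ k < n, σ^[k] s ∈ D) ∧ σ^[n] s = t := by
  intro t ht
  refine (existsUnique_congr fun s ↦ ?_).mp
    (existsUnique_source_reflTransGen (BusStep.leftUnique hinj) (hwf.apply t))
  rw [BusStep.forall_not_iff_notMem_image, ← BusStep.reflTransGen_iff_exists_iterate]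
  exact ⟨fun ⟨hs, hst⟩ ↦ ⟨⟨BusStep.mem_of_reflTransGen hDT ht hst, hs⟩, hst⟩,
    fun ⟨hs, hst⟩ ↦ ⟨hs.2, hst⟩⟩

/-- In a bus schedule whose successor map strictly increases a time label, every trip
lies on exactly one bus: it is reached from a unique first trip (a trip with no
predecessor) by iterating the successor map. -/
theorem every_trip_on_unique_bus {α : Type*} [DecidableEq α]
    (T D : Finset α) (σ : α → α) (b : α → ℝ)
    (hDT : D ⊆ T)
    (hinj : Set.InjOn σ ↑D)
    (hmap : ∀ t ∈ D, σ t ∈ T)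
    (hb : ∀ t ∈ D, b t < b (σ t)) :
    ∀ t ∈ T, ∃! s, s ∈ T \ D.image σ ∧
      ∃ n : ℕ, (∀ k < n, σ^[k] s ∈ D) ∧ σ^[n] s = t := by
  have hwf : WellFounded (BusStep D σ) := BusStep.wellFounded_of_finite_of_lt D.finite_toSet hb
  simpa only [Finset.mem_sdiff, Finset.mem_image, Set.mem_sdiff, Set.mem_image, Finset.mem_coe]
    using every_trip_on_unique_bus_general hDT hinj hwf
end

section
/- Suppose tt t > 0 for every trip t and dd t1 t2 ≥ 0 for all trips t1, t2. Let f : Fin (m + 1) → α be a chain of trips served consecutively by one bus, i.e., f i is compatible with f (i + 1) for every i < m. Then for all i < j, sb (O (f i)) < sb (O (f j)); in particular f is injective and O ∘ f is injective, so a single bus serves at most one trip of each school and the chain length m + 1 is at most the number of schools when K is finite. -/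
section TripChain

variable {α K R : Type*} {O : α → K} {sb : K → R} {tt : α → R} {dd : α → α → R}

/-- Compatibility of trips: a bus that starts `t₁` at the bell time of its school can finish it and
deadhead to the school of `t₂` by that school's bell time. Times are taken in an arbitrary type `R`
with addition and order, such as `ℝ`. -/
def TripCompatible [Add R] [LE R] (O : α → K) (sb : K → R) (tt : α → R) (dd : α → α → R)
    (t₁ t₂ : α) : Prop :=
  sb (O t₁) + tt t₁ + dd t₁ t₂ ≤ sb (O t₂)

variable [AddMonoid R] [Preorder R] [AddLeftStrictMono R]

theorem TripCompatible.bell_lt_bell {t₁ t₂ : α} (h : TripCompatible O sb tt dd t₁ t₂)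
    (hpos : 0 < tt t₁ + dd t₁ t₂) : sb (O t₁) < sb (O t₂) :=
  calc
    sb (O t₁) < sb (O t₁) + (tt t₁ + dd t₁ t₂) := lt_add_of_pos_right _ hpos
    _ = sb (O t₁) + tt t₁ + dd t₁ t₂ := (add_assoc _ _ _).symm
    _ ≤ sb (O t₂) := h

theorem strictMono_bell_of_tripCompatible {m : ℕ} {f : Fin (m + 1) → α}
    (hpos : ∀ i : Fin m, 0 < tt (f i.castSucc) + dd (f i.castSucc) (f i.succ))
    (hchain : ∀ i : Fin m, TripCompatible O sb tt dd (f i.castSucc) (f i.succ)) :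
    StrictMono (sb ∘ O ∘ f) :=
  Fin.strictMono_iff_lt_succ.2 fun i ↦ (hchain i).bell_lt_bell (hpos i)

theorem bus_chain_strictly_increasing_general {m : ℕ} {f : Fin (m + 1) → α}
    (hpos : ∀ i : Fin m, 0 < tt (f i.castSucc) + dd (f i.castSucc) (f i.succ))
    (hchain : ∀ i : Fin m, TripCompatible O sb tt dd (f i.castSucc) (f i.succ)) :
    (∀ i j : Fin (m + 1), i < j → sb (O (f i)) < sb (O (f j))) ∧
    Function.Injective f ∧
    Function.Injective (O ∘ f) ∧
    ((m + 1 : ℕ) : ℕ∞) ≤ ENat.card K := by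
  have hmono := strictMono_bell_of_tripCompatible hpos hchain
  have hschools : Function.Injective (O ∘ f) := hmono.injective.of_comp
  refine ⟨fun _ _ hij ↦ hmono hij, hschools.of_comp, hschools, ?_⟩
  simpa using ENat.card_le_card_of_injective hschools

end TripChain

/-- Along a chain of consecutively compatible trips served by one bus, school bell
times strictly increase; hence the chain visits pairwise distinct trips and pairwise
distinct schools, so its length is at most the number of schools when `K` is finite. -/
theorem bus_chain_strictly_increasing {α K : Type*} [Fintype K]
    (O : α → K) (sb : K → ℝ) (tt : α → ℝ) (dd : α → α → ℝ)
    (htt : ∀ t, 0 < tt t)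
    (hdd : ∀ t1 t2, 0 ≤ dd t1 t2)
    (m : ℕ) (f : Fin (m + 1) → α)
    (hchain : ∀ i : Fin m,
      sb (O (f i.castSucc)) + tt (f i.castSucc) + dd (f i.castSucc) (f i.succ)
        ≤ sb (O (f i.succ))) :
    (∀ i j : Fin (m + 1), i < j → sb (O (f i)) < sb (O (f j))) ∧
    Function.Injective f ∧
    Function.Injective (O ∘ f) ∧
    m + 1 ≤ Fintype.card K := by
  simpa only [ENat.card_eq_coe_fintype_card, Nat.cast_le] using
    bus_chain_strictly_increasing_general
      (fun _ ↦ add_pos_of_pos_of_nonneg (htt _) (hdd _ _)) hchain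
end

section
/- Suppose tt t > 0 for every trip t and dd t1 t2 ≥ 0 for all trips t1, t2. Let T be a finset of trips, D ⊆ T, and σ : α → α injective on D with σ '' D ⊆ T such that every t ∈ D is compatible with σ t. Then for every real number b, card T − card D ≥ card {t ∈ T : sb (O t) = b}. (The number of buses is at least the number of trips whose schools share any fixed bell time, since such trips are pairwise incompatible and must be served by distinct buses.) -/
/-!
Send each trip of `D` whose bell rings before `b` to itself and every other trip of `D` to its
successor. Since bell times strictly increase along `σ`, this map is injective and misses the trips
with bell time `b`, so `D` and those trips together are no more numerous than `T`. Cutting below an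
arbitrary antichain instead of below `b` gives the easy half of Dilworth's theorem: an antichain
meets each of the `#T - #D` chains traced out by `σ` at most once.
-/

open Finset

theorem injOn_ite_self_of_injOn {α : Type*} {s : Set α} {f : α → α} {p : α → Prop}
    [DecidablePred p] (hf : s.InjOn f) (hp : ∀ x ∈ s, p (f x) → p x) :
    s.InjOn fun x => if p x then x else f x := by
  intro x hx y hy hxy
  by_cases hpx : p x <;> by_cases hpy : p y <;> simp only [hpx, hpy, if_true, if_false] at hxy
  · exact hxy
  · exact absurd (hp y hy (hxy ▸ hpx)) hpy
  · exact absurd (hp x hx (hxy ▸ hpy)) hpx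
  · exact hf hx hy hxy

theorem card_add_card_le_card_of_isAntichain {α : Type*} {r : α → α → Prop} [IsStrictOrder α r]
    {A D T : Finset α} {σ : α → α} (hA : IsAntichain r (A : Set α)) (hAT : A ⊆ T) (hDT : D ⊆ T)
    (hinj : Set.InjOn σ D) (hmap : ∀ t ∈ D, σ t ∈ T) (hr : ∀ t ∈ D, r t (σ t)) :
    #A + #D ≤ #T := by
  classical
  let below (t : α) : Prop := ∃ a ∈ A, r t a
  have notMem_of_below {t : α} : below t → t ∉ A := fun ⟨a, ha, hta⟩ ht =>
    hA ht ha (ne_of_irrefl hta) hta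
  have below_of_below_succ : ∀ t ∈ D, below (σ t) → below t := fun t ht ⟨a, ha, hta⟩ =>
    ⟨a, ha, _root_.trans (hr t ht) hta⟩
  have mapsTo : Set.MapsTo (fun t => if below t then t else σ t) D ↑(T \ A) := by
    intro t ht
    rw [mem_coe, mem_sdiff]
    dsimp only
    split_ifs with hbelow
    · exact ⟨hDT ht, notMem_of_below hbelow⟩
    · exact ⟨hmap t ht, fun hσ => hbelow ⟨σ t, hσ, hr t ht⟩⟩
  have card_D_le : #D ≤ #(T \ A) :=
    card_le_card_of_injOn _ mapsTo (injOn_ite_self_of_injOn hinj below_of_below_succ)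
  calc #A + #D ≤ #A + #(T \ A) := Nat.add_le_add_left card_D_le _
    _ = #T := by rw [add_comm, card_sdiff_add_card_eq_card hAT]

theorem card_filter_eq_add_card_le_card {α β : Type*} [Preorder β] [DecidableEq β] {f : α → β}
    {D T : Finset α} {σ : α → α} (hDT : D ⊆ T) (hinj : Set.InjOn σ D)
    (hmap : ∀ t ∈ D, σ t ∈ T) (hlt : ∀ t ∈ D, f t < f (σ t)) (b : β) :
    #{t ∈ T | f t = b} + #D ≤ #T := by
  have level_isAntichain : IsAntichain (f ⁻¹'o (· < ·)) ({t ∈ T | f t = b} : Finset α) := by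
    intro s hs t ht _ hst
    exact hst.ne ((mem_filter.1 hs).2.trans (mem_filter.1 ht).2.symm)
  exact card_add_card_le_card_of_isAntichain level_isAntichain (filter_subset _ T) hDT hinj hmap hlt

theorem buses_ge_trips_with_common_bell_time_general {α K R : Type*} [AddZeroClass R] [Preorder R]
    [AddLeftMono R] [AddLeftStrictMono R] [DecidableEq R]
    (O : α → K) (sb : K → R) (tt : α → R) (dd : α → α → R) (T D : Finset α) (σ : α → α)
    (htt : ∀ t ∈ D, 0 < tt t)
    (hdd : ∀ t ∈ D, 0 ≤ dd t (σ t))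
    (hDT : D ⊆ T)
    (hinj : Set.InjOn σ D)
    (hmap : ∀ t ∈ D, σ t ∈ T)
    (hcomp : ∀ t ∈ D, sb (O t) + tt t + dd t (σ t) ≤ sb (O (σ t))) (b : R) :
    #{t ∈ T | sb (O t) = b} ≤ #T - #D :=
  have bell_lt : ∀ t ∈ D, sb (O t) < sb (O (σ t)) := fun t ht =>
    calc sb (O t) < sb (O t) + tt t := lt_add_of_pos_right _ (htt t ht)
      _ ≤ sb (O t) + tt t + dd t (σ t) := le_add_of_nonneg_right (hdd t ht)
      _ ≤ sb (O (σ t)) := hcomp t ht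
  Nat.le_sub_of_add_le (card_filter_eq_add_card_le_card hDT hinj hmap bell_lt b)

/-- The number of buses `card T − card D` of a feasible schedule is at least the number
of trips of `T` whose schools share any fixed bell time `b`, since such trips are
pairwise incompatible and must be served by distinct buses. -/
theorem buses_ge_trips_with_common_bell_time {α K : Type*} [DecidableEq α]
    (O : α → K) (sb : K → ℝ) (tt : α → ℝ) (dd : α → α → ℝ)
    (htt : ∀ t, 0 < tt t)
    (hdd : ∀ t1 t2, 0 ≤ dd t1 t2)
    (T D : Finset α) (σ : α → α)
    (hDT : D ⊆ T)
    (hinj : Set.InjOn σ ↑D)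
    (hmap : ∀ t ∈ D, σ t ∈ T)
    (hcomp : ∀ t ∈ D, sb (O t) + tt t + dd t (σ t) ≤ sb (O (σ t))) :
    ∀ b : ℝ, (T.filter fun t => sb (O t) = b).card ≤ T.card - D.card :=
  buses_ge_trips_with_common_bell_time_general O sb tt dd T D σ (fun t _ => htt t)
    (fun t _ => hdd t (σ t)) hDT hinj hmap hcomp
end

section
/- Let T and D be finsets of trips with D ⊆ T, O : α → K the school assignment with K a decidable-equality type, and f : α → K a function assigning to each trip of D a successor school, such that (i) for every school k, card {t ∈ D : f t = k} ≤ card {t ∈ T : O t = k}, and (ii) f t ≠ O t for every t ∈ D. Then there exists a function σ : α → α that is injective on D, maps D into T, and satisfies O (σ t) = f t and σ t ≠ t for every t ∈ D. (Any capacity-respecting trip-to-school assignment can be realized as an actual trip-to-trip bus schedule.) -/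
/-!
For each school `k`, the capacity bound gives an injection from the trips of `D` whose successor
school is `k` into the trips of `T` whose own school is `k`. Gluing these injections over `k` gives
an injective `σ`, because `O (σ t) = f t` recovers the fiber of `t` from `σ t`; and `σ t = t` would
force `f t = O t`.
-/

open scoped Cardinal

theorem exists_embedding_apply_eq_of_fiberwise {α β K : Type*} {f : α → K} {p : β → K}
    (h : ∀ k, Nonempty ({a // f a = k} ↪ {b // p b = k})) :
    ∃ e : α ↪ β, ∀ a, p (e a) = f a := by
  let g k := (h k).some
  let e : α ↪ β := (Equiv.sigmaFiberEquiv f).symm.toEmbedding.trans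
    ((Function.Embedding.sigmaMap (.refl K) g).trans (Equiv.sigmaFiberEquiv p).toEmbedding)
  exact ⟨e, fun a => (g (f a) ⟨a, rfl⟩).property⟩

theorem trip_to_school_realizable_general {α K : Type*} (T D : Set α) (O f : α → K)
    (hcard : ∀ k, #{t ∈ D | f t = k} ≤ #{t ∈ T | O t = k}) (hne : ∀ t ∈ D, f t ≠ O t) :
    ∃ σ : α → α, Set.InjOn σ D ∧ (∀ t ∈ D, σ t ∈ T) ∧
      (∀ t ∈ D, O (σ t) = f t) ∧ (∀ t ∈ D, σ t ≠ t) := by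
  have fiber_embedding (k : K) : Nonempty ({t : D // f t = k} ↪ {t : T // O t = k}) := by
    simp only [Cardinal.mk_sep, Cardinal.le_def] at hcard
    exact hcard k
  obtain ⟨e, he⟩ := exists_embedding_apply_eq_of_fiberwise fiber_embedding
  obtain ⟨σ, (hσ : D.domRestrict σ = (↑) ∘ e)⟩ :=
    Subtype.exists_pi_extension (α := fun _ => α) (ne := fun t => ⟨t⟩) fun t : D => e t
  have σ_eq (t : α) (ht : t ∈ D) : σ t = e ⟨t, ht⟩ := congrFun hσ ⟨t, ht⟩
  have σ_injOn : Set.InjOn σ D :=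
    Set.injOn_iff_injective.mpr (hσ ▸ Subtype.val_injective.comp e.injective)
  have σ_mem (t : α) (ht : t ∈ D) : σ t ∈ T := σ_eq t ht ▸ (e ⟨t, ht⟩).property
  have O_σ (t : α) (ht : t ∈ D) : O (σ t) = f t := σ_eq t ht ▸ he ⟨t, ht⟩
  have σ_ne (t : α) (ht : t ∈ D) : σ t ≠ t := fun hfix => hne t ht <| by rw [← O_σ t ht, hfix]
  exact ⟨σ, σ_injOn, σ_mem, O_σ, σ_ne⟩

/-- Any capacity-respecting trip-to-school assignment `f` on `D` (no school receives
more preceding trips than it has trips in `T`, and no trip is assigned its own school)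
can be realized as an actual trip-to-trip bus schedule: an injective successor map `σ`
into `T` with `O (σ t) = f t` and `σ t ≠ t` on `D`. -/
theorem trip_to_school_realizable {α K : Type*} [DecidableEq α] [DecidableEq K]
    (T D : Finset α) (O : α → K) (f : α → K)
    (hDT : D ⊆ T)
    (hcard : ∀ k : K, (D.filter fun t => f t = k).card ≤ (T.filter fun t => O t = k).card)
    (hne : ∀ t ∈ D, f t ≠ O t) :
    ∃ σ : α → α, Set.InjOn σ ↑D ∧ (∀ t ∈ D, σ t ∈ T) ∧
      (∀ t ∈ D, O (σ t) = f t) ∧ (∀ t ∈ D, σ t ≠ t) := by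
  refine trip_to_school_realizable_general T D O f (fun k => ?_) hne
  simpa only [Finset.mem_coe, ← Finset.coe_filter, Finset.coe_sort_coe, Cardinal.mk_coe_finset,
    Nat.cast_le] using hcard k
end

section
/- Let T be a finset of trips, O : α → K with K a decidable-equality fintype, and compS : α → K → Prop a (decidable) trip-to-school compatibility relation satisfying ¬ compS t (O t) for every t ∈ T. Then the maximum, over subsets D ⊆ T admitting an injective map σ : D → T with compS t (O (σ t)) for all t ∈ D, of card D, equals the maximum, over subsets D ⊆ T admitting a function f : D → K with compS t (f t) for all t ∈ D and card {t ∈ D : f t = k} ≤ card {t ∈ T : O t = k} for every school k, of card D. Consequently the minimum number of buses needed to serve T equals card T minus the maximum total trip-to-school compatibility achievable under the per-school capacity constraint. -/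
/-!
Recording only the school of each successor turns a successor map `σ` into the assignment `O ∘ σ`,
and injectivity of `σ` bounds the fibre of `O ∘ σ` over a school by the fibre of `O`. Conversely,
the capacity constraint provides, for every school `k`, an injection of the trips assigned to `k`
into the trips of `k`; these injections have disjoint ranges, so they glue to an injective successor
map. Hence the same sets `D` are feasible in both formulations, and minimizing the number of buses
`T.card - D.card` amounts to maximizing `D.card`.
-/

theorem exists_injOn_of_card_le_card {α β : Type*} [Nonempty β] {s : Finset α} {t : Finset β}
    (hcard : s.card ≤ t.card) : ∃ τ : α → β, Set.InjOn τ s ∧ ∀ a ∈ s, τ a ∈ t := by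
  have hencard : (s : Set α).encard ≤ (t : Set β).encard := by
    simpa only [Set.encard_coe_eq_coe_finsetCard, Nat.cast_le] using hcard
  obtain ⟨τ, hmaps, hinj⟩ := s.finite_toSet.exists_injOn_of_encard_le hencard
  exact ⟨τ, hinj, fun _ ha => hmaps ha⟩

section Fibers

variable {α β K : Type*} [DecidableEq K] {s : Finset α} {t : Finset β} {f : α → K} {g : β → K}

theorem card_fiber_le_card_fiber_of_injOn {σ : α → β} (hinj : Set.InjOn σ s)
    (hmaps : ∀ a ∈ s, σ a ∈ t) (hσ : ∀ a ∈ s, g (σ a) = f a) (k : K) :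
    (s.filter fun a => f a = k).card ≤ (t.filter fun b => g b = k).card := by
  refine Finset.card_le_card_of_injOn σ (fun a ha => ?_)
    (hinj.mono (Finset.coe_subset.2 (Finset.filter_subset _ s)))
  obtain ⟨has, rfl⟩ := Finset.mem_filter.1 ha
  exact Finset.mem_filter.2 ⟨hmaps a has, hσ a has⟩

theorem exists_injOn_of_card_fiber_le_card_fiber [Nonempty β]
    (hcard : ∀ k, (s.filter fun a => f a = k).card ≤ (t.filter fun b => g b = k).card) :
    ∃ σ : α → β, Set.InjOn σ s ∧ (∀ a ∈ s, σ a ∈ t) ∧ ∀ a ∈ s, g (σ a) = f a := by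
  choose τ hτ_inj hτ_maps using fun k => exists_injOn_of_card_le_card (hcard k)
  have mem_fiber {a k} (ha : a ∈ s) (hk : f a = k) : a ∈ s.filter fun a => f a = k :=
    Finset.mem_filter.2 ⟨ha, hk⟩
  have hτ (a) (ha : a ∈ s) : τ (f a) a ∈ t ∧ g (τ (f a) a) = f a :=
    Finset.mem_filter.1 (hτ_maps (f a) a (mem_fiber ha rfl))
  refine ⟨fun a => τ (f a) a, fun a ha b hb hab => ?_, fun a ha => (hτ a ha).1,
    fun a ha => (hτ a ha).2⟩
  have hf : f a = f b := (hτ a ha).2.symm.trans ((congrArg g hab).trans (hτ b hb).2)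
  refine hτ_inj (f b) (mem_fiber ha hf) (mem_fiber hb rfl) ?_
  simpa only [hf] using hab

end Fibers

theorem sInf_card_sub_card_eq_card_sub_sSup_card {α : Type*} {T : Finset α} {P : Finset α → Prop}
    (hP : ∃ D ⊆ T, P D) :
    sInf {n : ℕ | ∃ D : Finset α, D ⊆ T ∧ n = T.card - D.card ∧ P D}
      = T.card - sSup {n : ℕ | ∃ D : Finset α, D ⊆ T ∧ D.card = n ∧ P D} := by
  set sizes : Set ℕ := {n | ∃ D : Finset α, D ⊆ T ∧ D.card = n ∧ P D}
  have nonempty : sizes.Nonempty := let ⟨D, hDT, hD⟩ := hP; ⟨D.card, D, hDT, rfl, hD⟩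
  have bddAbove : BddAbove sizes :=
    ⟨T.card, fun _ ⟨_, hDT, hn, _⟩ => hn ▸ Finset.card_le_card hDT⟩
  have image_sizes : (T.card - ·) '' sizes =
      {n : ℕ | ∃ D : Finset α, D ⊆ T ∧ n = T.card - D.card ∧ P D} := by
    ext n
    constructor
    · rintro ⟨_, ⟨D, hDT, rfl, hD⟩, rfl⟩
      exact ⟨D, hDT, rfl, hD⟩
    · rintro ⟨D, hDT, rfl, hD⟩
      exact ⟨D.card, ⟨D, hDT, rfl, hD⟩, rfl⟩
  rw [← image_sizes]
  exact (antitone_const_tsub.map_csSup_of_continuousAt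
    continuous_of_discreteTopology.continuousAt nonempty bddAbove).symm

section Schedules

variable {α K : Type*}

/-- A trip-to-trip schedule: every trip `t ∈ D` is followed on its bus by the trip `σ t ∈ T`,
whose school `O (σ t)` is compatible with `t`. Only the values of `σ` on `D` matter. -/
def IsTripSchedule (T : Finset α) (O : α → K) (compS : α → K → Prop) (D : Finset α)
    (σ : α → α) : Prop :=
  Set.InjOn σ ↑D ∧ (∀ t ∈ D, σ t ∈ T) ∧ ∀ t ∈ D, compS t (O (σ t))

variable [DecidableEq K]

/-- A trip-to-school assignment: every trip `t ∈ D` is followed by some trip of the school `f t`,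
subject to the capacity constraint (37). Only the values of `f` on `D` matter. -/
def IsSchoolAssignment (T : Finset α) (O : α → K) (compS : α → K → Prop) (D : Finset α)
    (f : α → K) : Prop :=
  (∀ t ∈ D, compS t (f t)) ∧
    ∀ k : K, (D.filter fun t => f t = k).card ≤ (T.filter fun t => O t = k).card

variable {T D : Finset α} {O : α → K} {compS : α → K → Prop}

theorem IsTripSchedule.isSchoolAssignment {σ : α → α} (h : IsTripSchedule T O compS D σ) :
    IsSchoolAssignment T O compS D (O ∘ σ) :=
  ⟨h.2.2, card_fiber_le_card_fiber_of_injOn h.1 h.2.1 fun _ _ => rfl⟩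

theorem IsSchoolAssignment.exists_isTripSchedule {f : α → K}
    (h : IsSchoolAssignment T O compS D f) : ∃ σ, IsTripSchedule T O compS D σ := by
  obtain _ | _ := isEmpty_or_nonempty α
  · exact ⟨id, Function.injective_id.injOn, isEmptyElim, isEmptyElim⟩
  obtain ⟨σ, hinj, hmaps, hσ⟩ := exists_injOn_of_card_fiber_le_card_fiber h.2
  exact ⟨σ, hinj, hmaps, fun t ht => (hσ t ht).symm ▸ h.1 t ht⟩

theorem exists_isTripSchedule_iff_exists_isSchoolAssignment :
    (∃ σ, IsTripSchedule T O compS D σ) ↔ ∃ f, IsSchoolAssignment T O compS D f :=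
  ⟨fun ⟨_, hσ⟩ => ⟨_, hσ.isSchoolAssignment⟩, fun ⟨_, hf⟩ => hf.exists_isTripSchedule⟩

theorem isSchoolAssignment_empty : IsSchoolAssignment T O compS ∅ O := by
  simp [IsSchoolAssignment]

end Schedules

theorem trip_to_trip_max_eq_trip_to_school_max_general {α K : Type*} [DecidableEq K]
    (T : Finset α) (O : α → K) (compS : α → K → Prop) :
    (sSup {n : ℕ | ∃ D : Finset α, D ⊆ T ∧ D.card = n ∧ ∃ σ, IsTripSchedule T O compS D σ}
      = sSup {n : ℕ | ∃ D : Finset α, D ⊆ T ∧ D.card = n ∧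
          ∃ f, IsSchoolAssignment T O compS D f}) ∧
    (sInf {n : ℕ | ∃ D : Finset α, D ⊆ T ∧ n = T.card - D.card ∧
          ∃ σ, IsTripSchedule T O compS D σ}
      = T.card - sSup {n : ℕ | ∃ D : Finset α, D ⊆ T ∧ D.card = n ∧
          ∃ f, IsSchoolAssignment T O compS D f}) := by
  simp only [exists_isTripSchedule_iff_exists_isSchoolAssignment, true_and]
  exact sInf_card_sub_card_eq_card_sub_sSup_card
    ⟨∅, T.empty_subset, O, isSchoolAssignment_empty⟩

/-- Equivalence of the trip-to-trip and trip-to-school formulations: over subsets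
`D ⊆ T`, the maximum cardinality of a `D` admitting an injective successor map `σ`
into `T` with each successor's school compatible equals the maximum cardinality of a
`D` admitting a compatible trip-to-school assignment respecting the per-school capacity
constraint (37).  Consequently the minimum number of buses needed to serve `T` equals
`card T` minus the maximum trip-to-school compatibility. -/
theorem trip_to_trip_max_eq_trip_to_school_max {α K : Type*}
    [DecidableEq α] [DecidableEq K] [Fintype K]
    (T : Finset α) (O : α → K) (compS : α → K → Prop)
    [∀ t k, Decidable (compS t k)]
    (hself : ∀ t ∈ T, ¬ compS t (O t)) :
    (sSup {n : ℕ | ∃ D : Finset α, D ⊆ T ∧ D.card = n ∧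
        ∃ σ : α → α, Set.InjOn σ ↑D ∧ (∀ t ∈ D, σ t ∈ T) ∧
          ∀ t ∈ D, compS t (O (σ t))}
      = sSup {n : ℕ | ∃ D : Finset α, D ⊆ T ∧ D.card = n ∧
        ∃ f : α → K, (∀ t ∈ D, compS t (f t)) ∧
          ∀ k : K, (D.filter fun t => f t = k).card ≤ (T.filter fun t => O t = k).card}) ∧
    (sInf {n : ℕ | ∃ D : Finset α, D ⊆ T ∧ n = T.card - D.card ∧
        ∃ σ : α → α, Set.InjOn σ ↑D ∧ (∀ t ∈ D, σ t ∈ T) ∧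
          ∀ t ∈ D, compS t (O (σ t))}
      = T.card - sSup {n : ℕ | ∃ D : Finset α, D ⊆ T ∧ D.card = n ∧
        ∃ f : α → K, (∀ t ∈ D, compS t (f t)) ∧
          ∀ k : K, (D.filter fun t => f t = k).card ≤ (T.filter fun t => O t = k).card}) :=
  trip_to_trip_max_eq_trip_to_school_max_general T O compS
end
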